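/- arXiv:1909.05758 — 6 statements merged into one kernel-verified Lean document; each statement's English description precedes it below -/
import Mathlib

section
/- Let ρ be a positive semidefinite matrix, σ a positive definite matrix of the same size, and t > 0 a real number with ρ ≤ t·σ. Then tr(ρ σ⁻¹ ρ) ≤ t · tr ρ. In particular, for a density matrix ρ this yields D̂_2(ρ‖σ) = log tr(ρ σ⁻¹ ρ) ≤ D_max(ρ‖σ). -/
open Matrix Kronecker ComplexOrder

/-- The Loewner order: `A ≤ B` iff `B - A` is positive semidefinite. -/
def Loewner {n : Type*} [Fintype n] (A B : Matrix n n ℂ) : Prop := (B - A).PosSemidef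

/-- Real matrix power via the spectral decomposition, with the convention `0 ^ β = 0`
(so negative powers are Moore–Penrose pseudo-inverses on the support); defined to be `0`
on non-Hermitian matrices. -/
noncomputable def mpow {n : Type*} [Fintype n] [DecidableEq n] (A : Matrix n n ℂ) (β : ℝ) :
    Matrix n n ℂ :=
  if hA : A.IsHermitian then
    (hA.eigenvectorUnitary : Matrix n n ℂ) *
      Matrix.diagonal (fun i =>
        (Complex.ofReal (if hA.eigenvalues i = 0 then 0 else (hA.eigenvalues i) ^ β))) *
      (star (hA.eigenvectorUnitary : Matrix n n ℂ))
  else 0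

/-- Matrix logarithm via the spectral decomposition (with `Real.log 0 = 0` on the kernel);
defined to be `0` on non-Hermitian matrices. -/
noncomputable def mlog {n : Type*} [Fintype n] [DecidableEq n] (A : Matrix n n ℂ) :
    Matrix n n ℂ :=
  if hA : A.IsHermitian then
    (hA.eigenvectorUnitary : Matrix n n ℂ) *
      Matrix.diagonal (fun i => (Complex.ofReal (Real.log (hA.eigenvalues i)))) *
      (star (hA.eigenvectorUnitary : Matrix n n ℂ))
  else 0

/-- Weighted matrix geometric mean `G_β(X,Y) = X^{1/2} (X^{-1/2} Y X^{-1/2})^β X^{1/2}`. -/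
noncomputable def geomMean {n : Type*} [Fintype n] [DecidableEq n] (β : ℝ)
    (X Y : Matrix n n ℂ) : Matrix n n ℂ :=
  mpow X (1/2) * mpow (mpow X (-(1/2)) * Y * mpow X (-(1/2))) β * mpow X (1/2)

/-- Operator relative entropy `D_op(X,Y) = X^{1/2} log(X^{1/2} Y⁻¹ X^{1/2}) X^{1/2}`. -/
noncomputable def Dop {n : Type*} [Fintype n] [DecidableEq n] (X Y : Matrix n n ℂ) :
    Matrix n n ℂ :=
  mpow X (1/2) * mlog (mpow X (1/2) * Y⁻¹ * mpow X (1/2)) * mpow X (1/2)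

/-- Geometric Rényi divergence `D̂_α(ρ‖σ) = (α-1)⁻¹ log tr G_{1-α}(ρ,σ)`. -/
noncomputable def Dhat {n : Type*} [Fintype n] [DecidableEq n] (α : ℝ)
    (ρ σ : Matrix n n ℂ) : ℝ :=
  (α - 1)⁻¹ * Real.log ((geomMean (1 - α) ρ σ).trace.re)

/-- Max-relative entropy `D_max(ρ‖σ) = log inf {t : ρ ≤ t σ}`. -/
noncomputable def Dmax {n : Type*} [Fintype n] (ρ σ : Matrix n n ℂ) : ℝ :=
  Real.log (sInf {t : ℝ | Loewner ρ (t • σ)})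

/-- Umegaki relative entropy `D(ρ‖σ) = tr[ρ (log ρ - log σ)]`. -/
noncomputable def Dum {n : Type*} [Fintype n] [DecidableEq n] (ρ σ : Matrix n n ℂ) : ℝ :=
  ((ρ * (mlog ρ - mlog σ)).trace).re

/-- Sandwiched Rényi divergence. -/
noncomputable def Dsand {n : Type*} [Fintype n] [DecidableEq n] (α : ℝ)
    (ρ σ : Matrix n n ℂ) : ℝ :=
  (α - 1)⁻¹ *
    Real.log ((mpow (mpow σ ((1 - α)/(2*α)) * ρ * mpow σ ((1 - α)/(2*α))) α).trace.re)

/-- Petz Rényi divergence. -/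
noncomputable def Dpetz {n : Type*} [Fintype n] [DecidableEq n] (α : ℝ)
    (ρ σ : Matrix n n ℂ) : ℝ :=
  (α - 1)⁻¹ * Real.log ((mpow ρ α * mpow σ (1 - α)).trace.re)

/-- Partial trace over the second tensor factor. -/
noncomputable def ptrB {A B : Type*} [Fintype B] (M : Matrix (A × B) (A × B) ℂ) :
    Matrix A A ℂ :=
  Matrix.of fun a a' => ∑ b, M (a, b) (a', b)

/-- Partial transpose on the second tensor factor. -/
def ptB {A B : Type*} (M : Matrix (A × B) (A × B) ℂ) : Matrix (A × B) (A × B) ℂ :=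
  Matrix.of fun x y => M (x.1, y.2) (y.1, x.2)

/-- Largest eigenvalue of a Hermitian matrix (`0` on non-Hermitian matrices). -/
noncomputable def lamMax {n : Type*} [Fintype n] [DecidableEq n] (M : Matrix n n ℂ) : ℝ :=
  if hM : M.IsHermitian then ⨆ i, hM.eigenvalues i else 0

/-- The action `Λ_J(ρ)` on the `A`-subsystem of the CP map with Choi matrix `J`. -/
noncomputable def chanApply {R A B : Type*} [Fintype A] (J : Matrix (A × B) (A × B) ℂ)
    (ρ : Matrix (R × A) (R × A) ℂ) : Matrix (R × B) (R × B) ℂ :=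
  Matrix.of fun x y => ∑ a, ∑ a', ρ (x.1, a) (y.1, a') * J (a, x.2) (a', y.2)

/-- Cone of separable operators: finite sums of Kronecker products of PSD matrices. -/
def SEPcone (A B : Type*) [Fintype A] [Fintype B] : Set (Matrix (A × B) (A × B) ℂ) :=
  { M | ∃ (k : ℕ) (P : Fin k → Matrix A A ℂ) (Q : Fin k → Matrix B B ℂ),
      (∀ i, (P i).PosSemidef) ∧ (∀ i, (Q i).PosSemidef) ∧ M = ∑ i, (P i) ⊗ₖ (Q i) }

/-- Trace norm `‖X‖₁ = tr √(X* X)`. -/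
noncomputable def traceNorm {n : Type*} [Fintype n] [DecidableEq n] (X : Matrix n n ℂ) : ℝ :=
  ((mpow (Xᴴ * X) (1/2)).trace).re

/-- Moore–Penrose pseudo-inverse of a PSD matrix. -/
noncomputable def mpinv {n : Type*} [Fintype n] [DecidableEq n] (M : Matrix n n ℂ) :
    Matrix n n ℂ :=
  mpow M (-1)

/-- Link product of Choi matrices (Choi matrix of the composed map). -/
noncomputable def linkProd {A B C : Type*} [Fintype B] (J₁ : Matrix (A × B) (A × B) ℂ)
    (J₂ : Matrix (B × C) (B × C) ℂ) : Matrix (A × C) (A × C) ℂ :=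
  Matrix.of fun x y => ∑ b, ∑ b', J₁ (x.1, b) (y.1, b') * J₂ (b, x.2) (b', y.2)

/-!
Completing the square with `X = σ⁻¹ρ` gives
`t (tρ - ρσ⁻¹ρ) = (t - X)* ρ (t - X) + X* (tσ - ρ) X`,
and both summands on the right are positive semidefinite when `0 ≤ ρ ≤ tσ`. Hence
`ρσ⁻¹ρ ≤ tρ`; when `tr ρ = 1`, taking traces bounds `tr(ρσ⁻¹ρ)` by every `t` admissible in `D_max`.
-/

theorem smul_smul_sub_mul_inv_mul_eq {n R S : Type*} [Fintype n] [DecidableEq n] [CommRing R]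
    [StarRing R] [CommRing S] [StarRing S] [TrivialStar S] [Algebra S R] [StarModule S R]
    {ρ σ : Matrix n n R} (hρ : ρ.IsHermitian) (hσ : σ.IsHermitian) (hσu : IsUnit σ) (t : S) :
    t • (t • ρ - ρ * σ⁻¹ * ρ) =
      (t • 1 - σ⁻¹ * ρ)ᴴ * ρ * (t • 1 - σ⁻¹ * ρ) + (σ⁻¹ * ρ)ᴴ * (t • σ - ρ) * (σ⁻¹ * ρ) := by
  have hcancel : σ * (σ⁻¹ * ρ) = ρ :=
    mul_nonsing_inv_cancel_left σ ρ ((isUnit_iff_isUnit_det σ).1 hσu)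
  simp only [conjTranspose_sub, conjTranspose_smul, conjTranspose_one, conjTranspose_mul,
    hρ.eq, hσ.inv.eq, star_trivial, sub_mul, mul_sub, one_mul, mul_one, smul_mul_assoc,
    mul_smul_comm, Matrix.mul_assoc, hcancel, smul_sub]
  abel

section LoewnerOrder

open scoped MatrixOrder

variable {𝕜 n : Type*} [RCLike 𝕜] [Fintype n] {ρ σ : Matrix n n 𝕜} {t : ℝ}

theorem mul_inv_mul_le_smul [DecidableEq n] (hρ : ρ.PosSemidef) (hσ : σ.PosDef) (ht : 0 < t)
    (hle : ρ ≤ t • σ) : ρ * σ⁻¹ * ρ ≤ t • ρ := by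
  have hsum := (hρ.conjTranspose_mul_mul_same (t • 1 - σ⁻¹ * ρ)).add
    (PosSemidef.conjTranspose_mul_mul_same hle (σ⁻¹ * ρ))
  rw [← smul_smul_sub_mul_inv_mul_eq hρ.isHermitian hσ.isHermitian hσ.isUnit,
    ← nonneg_iff_posSemidef] at hsum
  exact sub_nonneg.1 (nonneg_of_smul_nonneg_of_pos_left hsum ht)

theorem trace_mono (h : ρ ≤ σ) : ρ.trace ≤ σ.trace :=
  OrderHomClass.mono (tracePositiveLinearMap n 𝕜 𝕜) h

theorem pos_of_le_smul_of_trace_pos (hσ : σ.PosSemidef) (hρ : 0 < ρ.trace) (hle : ρ ≤ t • σ) :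
    0 < t := by
  have htr : 0 < t • σ.trace := trace_smul t σ ▸ hρ.trans_le (trace_mono hle)
  exact pos_of_smul_pos_right htr hσ.trace_nonneg

theorem re_trace_mul_inv_mul_le [DecidableEq n] (hρ : ρ.PosSemidef) (hσ : σ.PosDef) (ht : 0 < t)
    (hle : ρ ≤ t • σ) : RCLike.re (ρ * σ⁻¹ * ρ).trace ≤ t * RCLike.re ρ.trace := by
  simpa only [trace_smul, RCLike.smul_re] using
    RCLike.re_le_re (trace_mono (mul_inv_mul_le_smul hρ hσ ht hle))

end LoewnerOrder

theorem trace_conjTranspose_mul_mul_pos {m n R : Type*} [Fintype m] [Fintype n] [Ring R]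
    [PartialOrder R] [StarRing R] [IsOrderedCancelAddMonoid R] {A : Matrix m m R}
    {B : Matrix m n R} (hA : A.PosDef) (hB : B ≠ 0) : 0 < (Bᴴ * A * B).trace := by
  have hdiag (j : n) : (Bᴴ * A * B) j j = star (B.col j) ⬝ᵥ A *ᵥ B.col j := by
    rw [Matrix.mul_assoc]; rfl
  obtain ⟨j, hj⟩ : ∃ j, B.col j ≠ 0 := by
    contrapose! hB
    exact Matrix.ext fun i j => congrFun (hB j) i
  refine Finset.sum_pos' (fun k _ => ?_) ⟨j, Finset.mem_univ j, ?_⟩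
  · exact (hA.posSemidef.conjTranspose_mul_mul_same B).diag_nonneg
  · rw [diag_apply, hdiag]
    exact hA.dotProduct_mulVec_pos hj

/-- if `ρ ≤ t·σ` with `ρ` PSD, `σ` positive definite, `t > 0`, then
`tr(ρ σ⁻¹ ρ) ≤ t · tr ρ`; in particular for a density matrix `ρ`,
`D̂₂(ρ‖σ) = log tr(ρ σ⁻¹ ρ) ≤ D_max(ρ‖σ)`. -/
theorem geom_two_le_dmax {n : Type*} [Fintype n] [DecidableEq n]
    (ρ σ : Matrix n n ℂ) (hρ : ρ.PosSemidef) (hσ : σ.PosDef)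
    (t : ℝ) (ht : 0 < t) (hle : Loewner ρ (t • σ)) :
    ((ρ * σ⁻¹ * ρ).trace).re ≤ t * ρ.trace.re ∧
      (ρ.trace = 1 → Real.log (((ρ * σ⁻¹ * ρ).trace).re) ≤ Dmax ρ σ) := by
  refine ⟨re_trace_mul_inv_mul_le hρ hσ ht hle, fun htr => ?_⟩
  have hρ0 : ρ ≠ 0 := by
    rintro rfl
    simp at htr
  have hpos : 0 < (ρ * σ⁻¹ * ρ).trace := by
    simpa only [hρ.isHermitian.eq] using trace_conjTranspose_mul_mul_pos hσ.inv hρ0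
  refine Real.log_le_log (Complex.lt_def.1 hpos).1 (le_csInf ⟨t, hle⟩ fun s hs => ?_)
  have hs0 : 0 < s := pos_of_le_smul_of_trace_pos hσ.posSemidef (htr ▸ one_pos) hs
  simpa [htr] using re_trace_mul_inv_mul_le hρ hσ hs0 hs
end

section
/- Let X be a positive semidefinite n×n complex matrix, Y a positive definite n×n complex matrix, and K an arbitrary m×n complex matrix. Then (K X K*) (K Y K*)⁺ (K X K*) ≤ K (X Y⁻¹ X) K* in the Loewner order, where (K Y K*)⁺ denotes the Moore–Penrose pseudo-inverse of K Y K*. -/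
open Matrix Kronecker ComplexOrder

/-! Conjugating `Y` by `W = 1 - K* P K Y`, where `P = (K Y K*)⁺`, makes the quadratic term collapse
through `P (K Y K*) P = P`, so that `0 ≤ W* Y W = Y - (K Y)* P (K Y)`; this is a Schur complement
inequality for positive semidefinite `Y` that involves no inverse of `Y`. Conjugating it by
`Y⁻¹ X K*` cancels the factors `Y` and gives the theorem. On matrices whose range lies in that of
`Y`, the pseudo-inverse `Y⁺` cancels `Y` just as well. -/

theorem mpow_eq_cfc {n : Type*} [Fintype n] [DecidableEq n] (A : Matrix n n ℂ) (β : ℝ) :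
    mpow A β = cfc (fun x : ℝ ↦ if x = 0 then 0 else x ^ β) A := by
  by_cases hA : A.IsHermitian
  · rw [hA.cfc_eq, IsHermitian.cfc, Unitary.conjStarAlgAut_apply, mpow, dif_pos hA]
    rfl
  · rw [mpow, dif_neg hA, cfc_apply_of_not_predicate (p := IsSelfAdjoint) A hA]

section MoorePenrose

variable {n : Type*} [Fintype n] [DecidableEq n] (M : Matrix n n ℂ)

theorem mpinv_eq_cfc_inv : mpinv M = cfc (fun x : ℝ ↦ x⁻¹) M := by
  rw [mpinv, mpow_eq_cfc]
  congr! 2 with x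
  simp +contextual [Real.rpow_neg_one]

theorem isHermitian_mpinv : (mpinv M).IsHermitian := by
  rw [mpinv_eq_cfc_inv]
  exact cfc_predicate _ M

variable {M}

theorem mpinv_mul_self_mul_mpinv (hM : M.IsHermitian) : mpinv M * M * mpinv M = mpinv M := by
  have hinv : ContinuousOn (fun x : ℝ ↦ x⁻¹) (spectrum ℝ M) :=
    M.finite_real_spectrum.continuousOn _
  have hreflexive (x : ℝ) : x⁻¹ * x * x⁻¹ = x⁻¹ := by
    simpa only [inv_inv] using mul_inv_mul_cancel x⁻¹
  calc mpinv M * M * mpinv M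
      = cfc (fun x : ℝ ↦ x⁻¹ * x * x⁻¹) M := by
        rw [mpinv_eq_cfc_inv, cfc_mul (fun x ↦ x⁻¹ * x) _ M (hinv.mul (continuousOn_id' _)) hinv,
          cfc_mul _ _ M hinv (continuousOn_id' _), cfc_id' ℝ M hM.isSelfAdjoint]
    _ = mpinv M := by simp only [hreflexive, mpinv_eq_cfc_inv]

theorem mpinv_eq_inv (hM : M.IsHermitian) (hunit : IsUnit M) : mpinv M = M⁻¹ := by
  obtain ⟨u, rfl⟩ := hunit
  rw [mpinv_eq_cfc_inv, cfc_inv_id u hM.isSelfAdjoint, coe_units_inv]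

end MoorePenrose

theorem posSemidef_sub_conjTranspose_mul_mul {R m n : Type*} [Ring R] [PartialOrder R]
    [StarRing R] [Fintype m] [Fintype n] {Y : Matrix n n R} {P : Matrix m m R}
    (hY : Y.PosSemidef) (K : Matrix m n R) (hPH : P.IsHermitian)
    (hP : P * (K * Y * Kᴴ) * P = P) :
    (Y - (K * Y)ᴴ * P * (K * Y)).PosSemidef := by
  classical
  set W := 1 - Kᴴ * P * K * Y with hW
  have hWH : Wᴴ = 1 - Y * Kᴴ * P * K := by
    simp [hW, hPH.eq, hY.isHermitian.eq, Matrix.mul_assoc]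
  suffices hsquare : Wᴴ * Y * W = Y - (K * Y)ᴴ * P * (K * Y) from
    hsquare ▸ hY.conjTranspose_mul_mul_same W
  calc Wᴴ * Y * W
      = Y - Y * Kᴴ * P * K * Y - Y * Kᴴ * P * K * Y
          + Y * Kᴴ * (P * (K * Y * Kᴴ) * P) * K * Y := by
        rw [hWH, hW]
        simp only [Matrix.mul_sub, Matrix.sub_mul, Matrix.mul_one, Matrix.one_mul,
          Matrix.mul_assoc]
        abel
    _ = Y - (K * Y)ᴴ * P * (K * Y) := by
        rw [hP, sub_add_cancel, conjTranspose_mul, hY.isHermitian.eq]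
        simp only [Matrix.mul_assoc]

/-- `hXY` encodes that the range of `X` lies in the range of `Y`. -/
theorem pinv_transformer_general {m n p : Type*} [Fintype m] [DecidableEq m] [Fintype n]
    [DecidableEq n] [Fintype p] {X : Matrix n p ℂ} {Y : Matrix n n ℂ} (hY : Y.PosSemidef)
    (hXY : Y * mpinv Y * X = X) (K : Matrix m n ℂ) :
    Loewner ((K * X)ᴴ * mpinv (K * Y * Kᴴ) * (K * X)) (Xᴴ * mpinv Y * X) := by
  set Z := mpinv Y * X with hZ
  have hYZ : Y * Z = X := by rw [hZ, ← Matrix.mul_assoc, hXY]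
  have hZYZ : Zᴴ * Y * Z = Xᴴ * mpinv Y * X := by
    rw [Matrix.mul_assoc, hYZ, hZ, conjTranspose_mul, (isHermitian_mpinv Y).eq]
  have hKYK := isHermitian_mul_mul_conjTranspose K hY.isHermitian
  have hschur := (posSemidef_sub_conjTranspose_mul_mul hY K (isHermitian_mpinv _)
    (mpinv_mul_self_mul_mpinv hKYK)).conjTranspose_mul_mul_same Z
  rw [Loewner, ← hZYZ]
  convert hschur using 1
  rw [← hYZ]
  simp only [Matrix.mul_sub, Matrix.sub_mul, conjTranspose_mul, Matrix.mul_assoc]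

/-- `(K X K*)(K Y K*)⁺(K X K*) ≤ K (X Y⁻¹ X) K*` for `X` PSD, `Y` positive
definite and any `K`, where `⁺` is the Moore–Penrose pseudo-inverse. -/
theorem pinv_transformer {n m : Type*} [Fintype n] [DecidableEq n]
    [Fintype m] [DecidableEq m]
    (X Y : Matrix n n ℂ) (hX : X.PosSemidef) (hY : Y.PosDef) (K : Matrix m n ℂ) :
    Loewner ((K * X * Kᴴ) * mpinv (K * Y * Kᴴ) * (K * X * Kᴴ))
      (K * (X * Y⁻¹ * X) * Kᴴ) := by
  have hYinv : mpinv Y = Y⁻¹ := mpinv_eq_inv hY.isHermitian hY.isUnit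
  have hXY : Y * mpinv Y * (X * Kᴴ) = X * Kᴴ := by
    rw [hYinv, mul_nonsing_inv Y ((isUnit_iff_isUnit_det Y).1 hY.isUnit), Matrix.one_mul]
  simpa [hYinv, hX.isHermitian.eq, Matrix.mul_assoc] using
    pinv_transformer_general hY.posSemidef hXY K
end

section
/- Let X and Y be positive definite n×n complex matrices and let K be an m×n complex matrix of full row rank m (so that K X K* and K Y K* are positive definite). Then D_op(K X K*, K Y K*) ≤ K D_op(X, Y) K* in the Loewner order; moreover, if m = n (so K is invertible), equality holds: D_op(K X K*, K Y K*) = K D_op(X, Y) K*. -/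
open Matrix Kronecker ComplexOrder

/-!
For invertible `S` and `A ≥ 0`, `Dop (S * A * Sᴴ) (S * Sᴴ) = S * φ(A) * Sᴴ` with `φ(x) = x log x`:
writing `G = S⁻¹ X^{1/2}` for `X = S * A * Sᴴ`, we have `G * Gᴴ = A` and
`Gᴴ * G = X^{1/2} (S * Sᴴ)⁻¹ X^{1/2}`, and `G` intertwines the logarithms of these two matrices.
Every pair `X ≥ 0`, `Y > 0` is of this form, so replacing `S` by `K * S` gives the equality for
invertible `K`. For `K` of full row rank, `K * S = T * Vᴴ` with `T` invertible and `V` an isometry,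
and the inequality becomes the operator Jensen inequality `φ(Vᴴ * A * V) ≤ Vᴴ * φ(A) * V`. It holds
because `φ` is operator convex, being the limit of `p⁻¹ (x - x ^ (1 - p))` as `p → 0⁺`, where
`x ^ (1 - p)` is operator concave.
-/

section XLogX

open Filter Topology

variable {x : ℝ}

lemma antitoneOn_inv_mul_sub_rpow_one_sub (hx : 0 ≤ x) :
    AntitoneOn (fun p : ℝ ↦ p⁻¹ * (x - x ^ (1 - p))) (Set.Ioo 0 1) := by
  obtain rfl | hx := hx.eq_or_lt
  · intro p hp q hq _
    simp [Real.zero_rpow (sub_pos.2 hp.2).ne', Real.zero_rpow (sub_pos.2 hq.2).ne']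
  have secant (p : ℝ) : p⁻¹ * (x - x ^ (1 - p)) = -(x * slope (x⁻¹ ^ · : ℝ → ℝ) 0 p) := by
    rw [Real.rpow_sub hx, Real.rpow_one, slope_def_field, Real.rpow_zero, Real.inv_rpow hx.le]
    ring
  have slope_mono := (convexOn_rpow_left (inv_pos.2 hx)).slope_mono (Set.mem_univ (0 : ℝ))
  intro p hp q hq hpq
  simp only [secant]
  gcongr
  exact slope_mono ⟨trivial, hp.1.ne'⟩ ⟨trivial, hq.1.ne'⟩ hpq

lemma tendsto_inv_mul_sub_rpow_one_sub (hx : 0 ≤ x) :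
    Tendsto (fun p : ℝ ↦ p⁻¹ * (x - x ^ (1 - p))) (𝓝[≠] 0) (𝓝 (x * Real.log x)) := by
  obtain rfl | hx := hx.eq_or_lt
  · refine tendsto_const_nhds.congr' ?_
    filter_upwards [nhdsWithin_le_nhds (eventually_ne_nhds (zero_ne_one' ℝ))] with p hp
    simp [Real.zero_rpow (sub_ne_zero.2 hp.symm)]
  have deriv_at_zero : HasDerivAt (fun p : ℝ ↦ -x ^ (1 - p)) (x * Real.log x) 0 := by
    simpa [mul_comm] using (((hasDerivAt_id' (0 : ℝ)).const_sub 1).const_rpow hx).fun_neg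
  simpa [neg_add_eq_sub] using deriv_at_zero.tendsto_slope_zero

lemma tendstoUniformlyOn_inv_mul_sub_rpow_one_sub {s : Set ℝ} (hs : IsCompact s)
    (hs₀ : s ⊆ Set.Ici 0) {p : ℕ → ℝ} (hp : Antitone p) (hp₀₁ : ∀ k, p k ∈ Set.Ioo 0 1)
    (hp₀ : Tendsto p atTop (𝓝 0)) :
    TendstoUniformlyOn (fun k x ↦ (p k)⁻¹ * (x - x ^ (1 - p k))) (fun x ↦ x * Real.log x)
      atTop s := by
  have tendsto_punctured : Tendsto p atTop (𝓝[≠] 0) :=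
    tendsto_nhdsWithin_iff.2 ⟨hp₀, .of_forall fun k ↦ (hp₀₁ k).1.ne'⟩
  refine Monotone.tendstoUniformlyOn_of_forall_tendsto hs (fun k ↦ ?_)
    (fun x hx j k hjk ↦ antitoneOn_inv_mul_sub_rpow_one_sub (hs₀ hx) (hp₀₁ k) (hp₀₁ j) (hp hjk))
    Real.continuous_mul_log.continuousOn
    fun x hx ↦ (tendsto_inv_mul_sub_rpow_one_sub (hs₀ hx)).comp tendsto_punctured
  have := Real.continuous_rpow_const (sub_nonneg.2 (hp₀₁ k).2.le)
  fun_prop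

end XLogX

section OperatorConvexity

open Filter Topology

variable {A : Type*} [CStarAlgebra A] [PartialOrder A] [StarOrderedRing A]

lemma convexOn_cfc_inv_mul_sub_rpow_one_sub {p : ℝ} (hp : p ∈ Set.Icc 0 1) :
    ConvexOn ℝ (Set.Ici (0 : A)) (cfc fun x : ℝ ↦ p⁻¹ * (x - x ^ (1 - p))) := by
  have smul_sub_rpow : ConvexOn ℝ (Set.Ici (0 : A)) fun a ↦ p⁻¹ • (a - a ^ (1 - p)) :=
    ((convexOn_id (convex_Ici 0)).sub
      (CFC.concaveOn_rpow ⟨sub_nonneg.2 hp.2, sub_le_self 1 hp.1⟩)).smul (inv_nonneg.2 hp.1)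
  refine smul_sub_rpow.congr fun a (ha : 0 ≤ a) ↦ ?_
  have := Real.continuous_rpow_const (sub_nonneg.2 hp.2)
  rw [cfc_const_mul _ (fun x : ℝ ↦ x - x ^ (1 - p)) a, cfc_sub _ _ a, cfc_id' ℝ a,
    ← CFC.rpow_eq_cfc_real]

lemma convexOn_cfc_mul_log :
    ConvexOn ℝ (Set.Ici (0 : A)) (cfc fun x : ℝ ↦ x * Real.log x) := by
  obtain ⟨p, hp, hp₀₁, hp₀⟩ := exists_seq_strictAnti_tendsto' (zero_lt_one' ℝ)
  have tendsto_cfc {a : A} (ha : 0 ≤ a) :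
      Tendsto (fun k ↦ cfc (fun x ↦ (p k)⁻¹ * (x - x ^ (1 - p k))) a) atTop
        (𝓝 (cfc (fun x ↦ x * Real.log x) a)) := by
    refine tendsto_cfc_fun (tendstoUniformlyOn_inv_mul_sub_rpow_one_sub
      (ContinuousFunctionalCalculus.isCompact_spectrum a)
      (fun x hx ↦ spectrum_nonneg_of_nonneg ha hx) hp.antitone hp₀₁ hp₀) (.of_forall fun k ↦ ?_)
    have := Real.continuous_rpow_const (sub_nonneg.2 (hp₀₁ k).2.le)
    fun_prop
  refine ⟨convex_Ici 0, fun a ha b hb s t hs ht hst ↦ ?_⟩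
  exact le_of_tendsto_of_tendsto' (tendsto_cfc ((convex_Ici 0) ha hb hs ht hst))
    (((tendsto_cfc ha).const_smul s).add ((tendsto_cfc hb).const_smul t)) fun k ↦
      (convexOn_cfc_inv_mul_sub_rpow_one_sub (Set.Ioo_subset_Icc_self (hp₀₁ k))).2 ha hb hs ht hst

end OperatorConvexity

section OperatorJensen

open scoped MatrixOrder

variable {𝕜 m n : Type*} [RCLike 𝕜] [Fintype m] [DecidableEq m] [Fintype n] [DecidableEq n]

open Polynomial in
lemma aeval_mul_eq_mul_aeval {A : Matrix m m 𝕜} {B : Matrix n n 𝕜} {V : Matrix m n 𝕜}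
    (h : A * V = V * B) (p : ℝ[X]) : aeval A p * V = V * aeval B p := by
  have pow_mul_eq (k : ℕ) : A ^ k * V = V * B ^ k := by
    induction k with
    | zero => simp
    | succ k ih =>
      rw [pow_succ, Matrix.mul_assoc, h, ← Matrix.mul_assoc, ih, Matrix.mul_assoc, ← pow_succ]
  induction p using Polynomial.induction_on' with
  | add p q hp hq => simp only [map_add, Matrix.add_mul, Matrix.mul_add, hp, hq]
  | monomial k c => simp [aeval_monomial, ← Algebra.smul_def, pow_mul_eq]

lemma cfc_mul_eq_mul_cfc {A : Matrix m m 𝕜} {B : Matrix n n 𝕜} (hA : A.IsHermitian)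
    (hB : B.IsHermitian) {V : Matrix m n 𝕜} (h : A * V = V * B) (f : ℝ → ℝ) :
    cfc f A * V = V * cfc f B := by
  obtain ⟨p, hp⟩ : ∃ p : Polynomial ℝ, (spectrum ℝ A ∪ spectrum ℝ B).EqOn f p.eval := by
    let s := (A.finite_real_spectrum.union B.finite_real_spectrum).toFinset
    exact ⟨Lagrange.interpolate s id f, fun x hx ↦ (Lagrange.eval_interpolate_at_node f
      (Set.injOn_id _) (by simpa [s] using hx)).symm⟩
  calc cfc f A * V = Polynomial.aeval A p * V := by
        rw [cfc_congr (hp.mono Set.subset_union_left), ← cfc_polynomial p A hA.isSelfAdjoint]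
    _ = V * Polynomial.aeval B p := aeval_mul_eq_mul_aeval h p
    _ = V * cfc f B := by
        rw [cfc_congr (hp.mono Set.subset_union_right), ← cfc_polynomial p B hB.isSelfAdjoint]

lemma exists_unitary_reflection {V : Matrix n m 𝕜} (hV : Vᴴ * V = 1) :
    ∃ U ∈ unitary (Matrix n n 𝕜), U * V = V ∧ V * Vᴴ = (2⁻¹ : ℝ) • (1 + U) := by
  let U : Matrix n n 𝕜 := (2 : ℝ) • (V * Vᴴ) - 1
  have U_mul_V : U * V = V := by
    rw [Matrix.sub_mul, Matrix.smul_mul, Matrix.mul_assoc, hV, Matrix.mul_one, Matrix.one_mul,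
      two_smul, add_sub_cancel_right]
  have star_U : star U = U := by simp [U, star_eq_conjTranspose]
  have V_mul_U : Vᴴ * U = Vᴴ := by
    simpa [← star_eq_conjTranspose, star_U] using congrArg conjTranspose U_mul_V
  have U_mul_self : U * U = 1 := by
    rw [Matrix.sub_mul, Matrix.one_mul, Matrix.smul_mul, Matrix.mul_assoc, V_mul_U, sub_sub_cancel]
  exact ⟨U, by simp [Unitary.mem_iff, star_U, U_mul_self], U_mul_V, by simp [U, smul_smul]⟩

-- Averaging `A` over the reflection `U` in the range of `V` gives a matrix `P` with
-- `P * V = V * (Vᴴ * A * V)`, so midpoint convexity suffices.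
lemma cfc_conjTranspose_mul_mul_le {I : Set ℝ} {f : ℝ → ℝ}
    (hf : ConvexOn ℝ {A : Matrix n n 𝕜 | A.IsHermitian ∧ spectrum ℝ A ⊆ I} (cfc f))
    {A : Matrix n n 𝕜} (hA : A.IsHermitian) (hAI : spectrum ℝ A ⊆ I) {V : Matrix n m 𝕜}
    (hV : Vᴴ * V = 1) :
    cfc f (Vᴴ * A * V) ≤ Vᴴ * cfc f A * V := by
  obtain ⟨U, hU, U_mul_V, V_mul_conj⟩ := exists_unitary_reflection hV
  have conj_U_mul_U : Uᴴ * U = 1 := Unitary.star_mul_self_of_mem hU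
  have conj_U_mul_V : Uᴴ * V = V := by
    simpa [← Matrix.mul_assoc, conj_U_mul_U] using (congrArg (Uᴴ * ·) U_mul_V).symm
  let B := U * A * Uᴴ
  let P : Matrix n n 𝕜 := (2⁻¹ : ℝ) • A + (2⁻¹ : ℝ) • B
  have hB : B.IsHermitian := isHermitian_mul_mul_conjTranspose U hA
  have hBI : spectrum ℝ B ⊆ I :=
    (Unitary.spectrum_star_right_conjugate (U := ⟨U, hU⟩)).trans_subset hAI
  have hP : P.IsHermitian :=
    (hf.1 ⟨hA, hAI⟩ ⟨hB, hBI⟩ (by norm_num) (by norm_num) (by norm_num)).1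
  have P_mul_V : P * V = V * (Vᴴ * A * V) := by
    calc P * V = (2⁻¹ : ℝ) • (1 + U) * (A * V) := by
          simp [P, B, Matrix.add_mul, Matrix.mul_assoc, conj_U_mul_V]
      _ = V * (Vᴴ * A * V) := by rw [← V_mul_conj]; simp only [Matrix.mul_assoc]
  have compress_P : Vᴴ * cfc f P * V = cfc f (Vᴴ * A * V) := by
    rw [Matrix.mul_assoc, cfc_mul_eq_mul_cfc hP (isHermitian_conjTranspose_mul_mul V hA) P_mul_V,
      ← Matrix.mul_assoc, hV, Matrix.one_mul]
  have compress_B : Vᴴ * cfc f B * V = Vᴴ * cfc f A * V := by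
    have B_mul_U : B * U = U * A := by simp only [B, mul_assoc, conj_U_mul_U, mul_one]
    have V_mul_U : Vᴴ * U = Vᴴ := by simpa using congrArg conjTranspose conj_U_mul_V
    calc Vᴴ * cfc f B * V = Vᴴ * (cfc f B * U) * V := by simp only [Matrix.mul_assoc, U_mul_V]
      _ = Vᴴ * U * cfc f A * V := by
        rw [cfc_mul_eq_mul_cfc hB hA B_mul_U, ← Matrix.mul_assoc]
      _ = Vᴴ * cfc f A * V := by rw [V_mul_U]
  have convexity : cfc f P ≤ (2⁻¹ : ℝ) • cfc f A + (2⁻¹ : ℝ) • cfc f B :=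
    hf.2 ⟨hA, hAI⟩ ⟨hB, hBI⟩ (by norm_num) (by norm_num) (by norm_num)
  have := (Matrix.le_iff.1 convexity).conjTranspose_mul_mul_same V
  rwa [Matrix.mul_sub, Matrix.sub_mul, compress_P, Matrix.mul_add, Matrix.add_mul, Matrix.mul_smul,
    Matrix.smul_mul, Matrix.mul_smul, Matrix.smul_mul, compress_B, ← add_smul,
    ← two_mul, mul_inv_cancel₀ two_ne_zero, one_smul] at this

lemma posSemidef_iff_isHermitian_and_real_spectrum_nonneg {A : Matrix n n 𝕜} :
    A.PosSemidef ↔ A.IsHermitian ∧ spectrum ℝ A ⊆ Set.Ici 0 := by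
  refine ⟨fun hA ↦ ⟨hA.isHermitian, fun x hx ↦ spectrum_nonneg_of_nonneg hA.nonneg hx⟩,
    fun ⟨hA, hA₀⟩ ↦ hA.posSemidef_iff_eigenvalues_nonneg.2 ?_⟩
  rwa [hA.spectrum_real_eq_range_eigenvalues, Set.range_subset_iff] at hA₀

lemma cfc_mul_self {A : Matrix n n 𝕜} (hA : A.IsHermitian) (f : ℝ → ℝ) :
    cfc f A * A = cfc (fun x ↦ x * f x) A := by
  have := cfc_mul f (fun x ↦ x) A (A.finite_real_spectrum.continuousOn _)
  simpa [cfc_id' ℝ A hA.isSelfAdjoint, mul_comm] using this.symm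

end OperatorJensen

section Factorizations

open scoped MatrixOrder Matrix.Norms.L2Operator

variable {𝕜 m n : Type*} [RCLike 𝕜] [Fintype m] [Fintype n]

lemma vecMul_injective_of_rank_eq_card {K : Matrix m n 𝕜} (hK : K.rank = Fintype.card m) :
    Function.Injective K.vecMul := by
  rw [vecMul_injective_iff, linearIndependent_iff_card_eq_finrank_span, ← hK,
    rank_eq_finrank_span_row]
  rfl

lemma exists_eq_isUnit_mul_conjTranspose_isometry [DecidableEq m] {L : Matrix m n 𝕜}
    (hL : (L * Lᴴ).PosDef) :
    ∃ (T : Matrix m m 𝕜) (V : Matrix n m 𝕜), IsUnit T ∧ Vᴴ * V = 1 ∧ L = T * Vᴴ := by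
  obtain ⟨T, hT, hLT⟩ :=
    CStarAlgebra.isStrictlyPositive_iff_eq_mul_star_self.1 hL.isStrictlyPositive
  cases hT.nonempty_invertible
  refine ⟨T, Lᴴ * T⁻¹ᴴ, hT, ?_, by simp⟩
  calc (Lᴴ * T⁻¹ᴴ)ᴴ * (Lᴴ * T⁻¹ᴴ) = T⁻¹ * (L * Lᴴ) * Tᴴ⁻¹ := by
        simp [Matrix.mul_assoc, conjTranspose_nonsing_inv]
    _ = 1 := by simp [hLT, star_eq_conjTranspose]

lemma exists_simultaneous_congruence [DecidableEq n] {X Y : Matrix n n 𝕜} (hX : X.PosSemidef)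
    (hY : Y.PosDef) :
    ∃ S A : Matrix n n 𝕜, IsUnit S ∧ A.PosSemidef ∧ X = S * A * Sᴴ ∧ Y = S * Sᴴ := by
  obtain ⟨S, hS, rfl⟩ :=
    CStarAlgebra.isStrictlyPositive_iff_eq_mul_star_self.1 hY.isStrictlyPositive
  cases hS.nonempty_invertible
  exact ⟨S, S⁻¹ * X * S⁻¹ᴴ, hS, hX.mul_mul_conjTranspose_same _,
    by simp [Matrix.mul_assoc, conjTranspose_nonsing_inv], rfl⟩

end Factorizations

section OperatorRelativeEntropy

open scoped MatrixOrder

variable {m n : Type*} [Fintype m] [DecidableEq m] [Fintype n] [DecidableEq n]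

open scoped Matrix.Norms.L2Operator in
lemma cfc_mul_log_conjTranspose_mul_mul_le {A : Matrix n n ℂ} (hA : A.PosSemidef)
    {V : Matrix n m ℂ} (hV : Vᴴ * V = 1) :
    cfc (fun x : ℝ ↦ x * Real.log x) (Vᴴ * A * V) ≤
      Vᴴ * cfc (fun x : ℝ ↦ x * Real.log x) A * V := by
  refine cfc_conjTranspose_mul_mul_le (I := Set.Ici 0) ?_ hA.isHermitian
    (posSemidef_iff_isHermitian_and_real_spectrum_nonneg.1 hA).2 hV
  simp only [← posSemidef_iff_isHermitian_and_real_spectrum_nonneg, ← nonneg_iff_posSemidef]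
  exact convexOn_cfc_mul_log

lemma mlog_eq_cfc (A : Matrix n n ℂ) : mlog A = cfc Real.log A := by
  by_cases hA : A.IsHermitian
  · rw [mlog, dif_pos hA, hA.cfc_eq, IsHermitian.cfc, Unitary.conjStarAlgAut_apply]
    rfl
  · rw [mlog, dif_neg hA, cfc_apply_of_not_predicate A (mt IsSelfAdjoint.isHermitian hA)]

lemma mpow_half_eq_sqrt {X : Matrix n n ℂ} (hX : X.PosSemidef) :
    mpow X (1 / 2) = CFC.sqrt X := by
  rw [mpow, dif_pos hX.isHermitian, CFC.sqrt_eq_real_sqrt X hX.nonneg, cfcₙ_eq_cfc,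
    hX.isHermitian.cfc_eq, IsHermitian.cfc, Unitary.conjStarAlgAut_apply]
  congr with i
  change _ = ((√(hX.isHermitian.eigenvalues i) : ℝ) : ℂ)
  split_ifs with h
  · rw [h, Real.sqrt_zero]
  · rw [Real.sqrt_eq_rpow]

lemma Dop_mul_mul_conjTranspose {A S : Matrix n n ℂ} (hA : A.PosSemidef) (hS : IsUnit S) :
    Dop (S * A * Sᴴ) (S * Sᴴ) = S * cfc (fun x : ℝ ↦ x * Real.log x) A * Sᴴ := by
  cases hS.nonempty_invertible
  let X := S * A * Sᴴ
  have hX : X.PosSemidef := hA.mul_mul_conjTranspose_same S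
  have sqrt_mul_sqrt : CFC.sqrt X * CFC.sqrt X = X := CFC.sqrt_mul_sqrt_self X hX.nonneg
  have sqrt_hermitian : (CFC.sqrt X)ᴴ = CFC.sqrt X := (CFC.sqrt_nonneg X).posSemidef.isHermitian
  let G := S⁻¹ * CFC.sqrt X
  have S_mul_G : S * G = CFC.sqrt X := mul_inv_cancel_left_of_invertible ..
  have G_mul_conj : G * Gᴴ = A := by
    calc G * Gᴴ = S⁻¹ * X * Sᴴ⁻¹ := by
          rw [conjTranspose_mul, sqrt_hermitian, conjTranspose_nonsing_inv, Matrix.mul_assoc,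
            ← Matrix.mul_assoc _ _ Sᴴ⁻¹, sqrt_mul_sqrt, ← Matrix.mul_assoc]
      _ = A := by simp [X, Matrix.mul_assoc]
  have conj_mul_G : Gᴴ * G = CFC.sqrt X * (S * Sᴴ)⁻¹ * CFC.sqrt X := by
    rw [conjTranspose_mul, sqrt_hermitian, Matrix.mul_inv_rev, conjTranspose_nonsing_inv]
    simp only [G, mul_assoc]
  have log_intertwine : cfc Real.log A * G = G * cfc Real.log (Gᴴ * G) :=
    cfc_mul_eq_mul_cfc hA.isHermitian (isHermitian_conjTranspose_mul_self G)
      (by rw [← G_mul_conj, Matrix.mul_assoc]) Real.log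
  calc Dop X (S * Sᴴ) = S * G * cfc Real.log (Gᴴ * G) * (S * G)ᴴ := by
        rw [Dop, mpow_half_eq_sqrt hX, mlog_eq_cfc, S_mul_G, conj_mul_G, sqrt_hermitian]
    _ = S * (cfc Real.log A * (G * Gᴴ)) * Sᴴ := by
        rw [Matrix.mul_assoc S, ← log_intertwine, conjTranspose_mul]
        simp only [Matrix.mul_assoc]
    _ = S * cfc (fun x : ℝ ↦ x * Real.log x) A * Sᴴ := by
        rw [G_mul_conj, cfc_mul_self hA.isHermitian]

lemma Dop_mul_mul_conjTranspose_le {A : Matrix n n ℂ} (hA : A.PosSemidef) {L : Matrix m n ℂ}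
    (hL : (L * Lᴴ).PosDef) :
    Dop (L * A * Lᴴ) (L * Lᴴ) ≤ L * cfc (fun x : ℝ ↦ x * Real.log x) A * Lᴴ := by
  obtain ⟨T, V, hT, hV, rfl⟩ := exists_eq_isUnit_mul_conjTranspose_isometry hL
  have jensen := cfc_mul_log_conjTranspose_mul_mul_le hA hV
  replace jensen := (Matrix.le_iff.1 jensen).mul_mul_conjTranspose_same T
  rw [Matrix.mul_sub, Matrix.sub_mul, ← Matrix.le_iff,
    ← Dop_mul_mul_conjTranspose (hA.conjTranspose_mul_mul_same V) hT] at jensen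
  have mul_conj : T * Vᴴ * (T * Vᴴ)ᴴ = T * Tᴴ := by
    rw [conjTranspose_mul, conjTranspose_conjTranspose, Matrix.mul_assoc, ← Matrix.mul_assoc Vᴴ,
      hV, Matrix.one_mul]
  rw [mul_conj]
  simpa [Matrix.mul_assoc] using jensen

-- For singular `X` the value of `log` at `0` is immaterial: `X^{1/2} * Y⁻¹ * X^{1/2}` has the
-- kernel of `X^{1/2}`, which the outer factors of `Dop X Y` annihilate.
theorem Dop_transformer_general (X Y : Matrix n n ℂ) (hX : X.PosSemidef) (hY : Y.PosDef) :
    (∀ K : Matrix m n ℂ, K.rank = Fintype.card m →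
        Loewner (Dop (K * X * Kᴴ) (K * Y * Kᴴ)) (K * Dop X Y * Kᴴ)) ∧
    (∀ K : Matrix n n ℂ, IsUnit K →
        Dop (K * X * Kᴴ) (K * Y * Kᴴ) = K * Dop X Y * Kᴴ) := by
  obtain ⟨S, A, hS, hA, rfl, rfl⟩ := exists_simultaneous_congruence hX hY
  rw [Dop_mul_mul_conjTranspose hA hS]
  refine ⟨fun K hK ↦ ?_, fun K hK ↦ ?_⟩
  · have posDef_KS : ((K * S) * (K * S)ᴴ).PosDef := by
      simpa [Matrix.mul_assoc] using
        hY.mul_mul_conjTranspose_same (vecMul_injective_of_rank_eq_card hK)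
    simpa [Loewner, Matrix.le_iff, Matrix.mul_assoc] using
      Dop_mul_mul_conjTranspose_le hA posDef_KS
  · simpa [Matrix.mul_assoc] using Dop_mul_mul_conjTranspose hA (hK.mul hS)

end OperatorRelativeEntropy

/-- transformer inequality for the operator relative entropy:
`D_op(K X K*, K Y K*) ≤ K D_op(X, Y) K*` for `K` of full row rank, with equality for
square invertible `K`. -/
theorem Dop_transformer {n m : Type*} [Fintype n] [DecidableEq n]
    [Fintype m] [DecidableEq m]
    (X Y : Matrix n n ℂ) (hX : X.PosDef) (hY : Y.PosDef) :
    (∀ K : Matrix m n ℂ, K.rank = Fintype.card m →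
        Loewner (Dop (K * X * Kᴴ) (K * Y * Kᴴ)) (K * Dop X Y * Kᴴ)) ∧
    (∀ K : Matrix n n ℂ, IsUnit K →
        Dop (K * X * Kᴴ) (K * Y * Kᴴ) = K * Dop X Y * Kᴴ) :=
  Dop_transformer_general X Y hX.posSemidef hY
end

section
/- Let X₁, Y₁ be positive semidefinite n×n complex matrices, let X₂, Y₂ be positive semidefinite m×m complex matrices, and let β ∈ ℝ. Then the weighted matrix geometric mean is multiplicative under Kronecker products: G_β(X₁ ⊗ X₂, Y₁ ⊗ Y₂) = G_β(X₁, Y₁) ⊗ G_β(X₂, Y₂). -/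
open Matrix Kronecker ComplexOrder

/-!
Write `A = U diag(a) U*` and `B = V diag(b) V*`. Then `A ⊗ B = (U ⊗ V) diag(aᵢ bⱼ) (U ⊗ V)*`, and
a function of a Hermitian matrix may be computed from any unitary diagonalization, because on the
finite spectrum it agrees with a polynomial. Hence a function that is multiplicative on the
eigenvalues commutes with `⊗`. On nonnegative reals `x ↦ x ^ β` with `0 ^ β = 0` is such a function,
and the geometric mean is a product of matrix powers of positive semidefinite matrices.
-/

open Polynomial Unitary

theorem exists_polynomial_eqOn {F : Type*} [Field F] {s : Set F} (hs : s.Finite) (f : F → F) :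
    ∃ q : F[X], s.EqOn f q.eval := by
  classical
  exact ⟨Lagrange.interpolate hs.toFinset id f, fun x hx ↦
    (Lagrange.eval_interpolate_at_node f (Set.injOn_id _) (hs.mem_toFinset.2 hx)).symm⟩

theorem cfc_algHom_pi_apply {R ι A : Type*} [Finite ι] [Field R] [StarRing R] [MetricSpace R]
    [IsTopologicalSemiring R] [ContinuousStar R] [Ring A] [StarRing A] [TopologicalSpace A]
    [Algebra R A] {p : A → Prop} [ContinuousFunctionalCalculus R A p]
    (φ : (ι → R) →ₐ[R] A) (f : R → R) (d : ι → R) (hd : p (φ d)) :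
    cfc f (φ d) = φ (f ∘ d) := by
  obtain ⟨q, hq⟩ := exists_polynomial_eqOn (Set.finite_range d) f
  have spectrum_subset : spectrum R (φ d) ⊆ Set.range d :=
    (AlgHom.spectrum_apply_subset φ d).trans <| by
      rw [Pi.spectrum_eq, Set.iUnion_subset_iff]
      intro i
      rw [← Algebra.algebraMap_self_apply (d i), spectrum.scalar_eq, Set.singleton_subset_iff]
      exact Set.mem_range_self i
  calc cfc f (φ d) = cfc q.eval (φ d) := cfc_congr (hq.mono spectrum_subset)
    _ = aeval (φ d) q := cfc_polynomial q (φ d)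
    _ = φ (aeval d q) := aeval_algHom_apply φ d q
    _ = φ (f ∘ d) := by
      congr 1
      ext i
      simp [hq (Set.mem_range_self i)]

section Kronecker

variable {𝕜 n m : Type*} [RCLike 𝕜] [Fintype n] [DecidableEq n] [Fintype m] [DecidableEq m]

theorem cfc_conjStarAlgAut_diagonal (U : unitary (Matrix n n 𝕜)) (f : ℝ → ℝ) (d : n → ℝ) :
    cfc f (conjStarAlgAut 𝕜 _ U (diagonal (RCLike.ofReal ∘ d))) =
      conjStarAlgAut 𝕜 _ U (diagonal (RCLike.ofReal ∘ f ∘ d)) := by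
  let φ : (n → ℝ) →ₐ[ℝ] Matrix n n 𝕜 :=
    ((conjStarAlgAut 𝕜 _ U : Matrix n n 𝕜 →ₐ[𝕜] Matrix n n 𝕜).restrictScalars ℝ).comp
      ((diagonalAlgHom ℝ).comp (RCLike.ofRealAm.compLeft n))
  have isSelfAdjoint_diagonal : IsSelfAdjoint (diagonal (RCLike.ofReal ∘ d) : Matrix n n 𝕜) :=
    isHermitian_diagonal_iff.2 fun i ↦ RCLike.conj_ofReal (d i)
  exact cfc_algHom_pi_apply φ f d (isSelfAdjoint_diagonal.map (conjStarAlgAut 𝕜 _ U))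

theorem conjStarAlgAut_kronecker (U : unitary (Matrix n n 𝕜)) (V : unitary (Matrix m m 𝕜))
    (A : Matrix n n 𝕜) (B : Matrix m m 𝕜) :
    conjStarAlgAut 𝕜 _ U A ⊗ₖ conjStarAlgAut 𝕜 _ V B =
      conjStarAlgAut 𝕜 _ ⟨U.1 ⊗ₖ V.1, kronecker_mem_unitary U.2 V.2⟩ (A ⊗ₖ B) := by
  simp [mul_kronecker_mul, star_eq_conjTranspose, conjTranspose_kronecker]

theorem cfc_kronecker {A : Matrix n n 𝕜} {B : Matrix m m 𝕜} (hA : A.IsHermitian)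
    (hB : B.IsHermitian) (f : ℝ → ℝ)
    (hf : ∀ a ∈ spectrum ℝ A, ∀ b ∈ spectrum ℝ B, f (a * b) = f a * f b) :
    cfc f (A ⊗ₖ B) = cfc f A ⊗ₖ cfc f B := by
  let W : unitary (Matrix (n × m) (n × m) 𝕜) := ⟨_, kronecker_mem_unitary
    hA.eigenvectorUnitary.2 hB.eigenvectorUnitary.2⟩
  let d (i : n × m) : ℝ := hA.eigenvalues i.1 * hB.eigenvalues i.2
  have kronecker_eq : A ⊗ₖ B = conjStarAlgAut 𝕜 _ W (diagonal (RCLike.ofReal ∘ d)) := by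
    conv_lhs => rw [hA.spectral_theorem, hB.spectral_theorem]
    rw [conjStarAlgAut_kronecker, diagonal_kronecker_diagonal]
    simp [W, d, Function.comp_def]
  have map_eigenvalues (i : n × m) :
      f (d i) = f (hA.eigenvalues i.1) * f (hB.eigenvalues i.2) :=
    hf _ (hA.eigenvalues_mem_spectrum_real _) _ (hB.eigenvalues_mem_spectrum_real _)
  rw [kronecker_eq, cfc_conjStarAlgAut_diagonal, hA.cfc_eq, hB.cfc_eq, IsHermitian.cfc,
    IsHermitian.cfc, conjStarAlgAut_kronecker, diagonal_kronecker_diagonal]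
  simp [W, map_eigenvalues, Function.comp_def]

end Kronecker

/-- The real power `x ^ β` with `0 ^ β = 0` for every `β`, in particular for `β = 0`, where
`Real.rpow` gives `1`. This is the function that `mpow` applies to the eigenvalues. -/
noncomputable def supportRpow (β x : ℝ) : ℝ := if x = 0 then 0 else x ^ β

theorem supportRpow_mul {x y : ℝ} (β : ℝ) (hx : 0 ≤ x) (hy : 0 ≤ y) :
    supportRpow β (x * y) = supportRpow β x * supportRpow β y := by
  by_cases hx₀ : x = 0
  · simp [supportRpow, hx₀]
  by_cases hy₀ : y = 0
  · simp [supportRpow, hy₀]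
  simp [supportRpow, hx₀, hy₀, Real.mul_rpow hx hy]

section MatrixPower

variable {n m : Type*} [Fintype n] [DecidableEq n] [Fintype m] [DecidableEq m]

theorem mpow_eq_cfc_s9 (A : Matrix n n ℂ) (β : ℝ) : mpow A β = cfc (supportRpow β) A := by
  by_cases hA : A.IsHermitian
  · rw [mpow, dif_pos hA, hA.cfc_eq, IsHermitian.cfc, conjStarAlgAut_apply]
    rfl
  · rw [mpow, dif_neg hA, cfc_apply_of_not_predicate A (p := IsSelfAdjoint) hA]

theorem isHermitian_mpow (A : Matrix n n ℂ) (β : ℝ) : (mpow A β).IsHermitian := by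
  rw [mpow_eq_cfc_s9]
  exact IsSelfAdjoint.cfc

theorem posSemidef_mpow_mul_mul_mpow {Y : Matrix n n ℂ} (hY : Y.PosSemidef) (X : Matrix n n ℂ)
    (β : ℝ) : (mpow X β * Y * mpow X β).PosSemidef := by
  simpa only [(isHermitian_mpow X β).eq] using hY.mul_mul_conjTranspose_same (mpow X β)

theorem mpow_kronecker {A : Matrix n n ℂ} {B : Matrix m m ℂ} (hA : A.PosSemidef)
    (hB : B.PosSemidef) (β : ℝ) : mpow (A ⊗ₖ B) β = mpow A β ⊗ₖ mpow B β := by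
  simp only [mpow_eq_cfc_s9]
  open scoped MatrixOrder in
  exact cfc_kronecker hA.1 hB.1 (supportRpow β) fun a ha b hb ↦ supportRpow_mul β
    (spectrum_nonneg_of_nonneg hA.nonneg ha) (spectrum_nonneg_of_nonneg hB.nonneg hb)

end MatrixPower

/-- multiplicativity of the weighted matrix geometric mean under Kronecker
products: `G_β(X₁ ⊗ X₂, Y₁ ⊗ Y₂) = G_β(X₁, Y₁) ⊗ G_β(X₂, Y₂)`. -/
theorem geomMean_kronecker {n m : Type*} [Fintype n] [DecidableEq n]
    [Fintype m] [DecidableEq m]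
    (X₁ Y₁ : Matrix n n ℂ) (hX₁ : X₁.PosSemidef) (hY₁ : Y₁.PosSemidef)
    (X₂ Y₂ : Matrix m m ℂ) (hX₂ : X₂.PosSemidef) (hY₂ : Y₂.PosSemidef) (β : ℝ) :
    geomMean β (X₁ ⊗ₖ X₂) (Y₁ ⊗ₖ Y₂) = geomMean β X₁ Y₁ ⊗ₖ geomMean β X₂ Y₂ := by
  have mpow_sandwich_kronecker (γ : ℝ) :
      mpow (X₁ ⊗ₖ X₂) γ * (Y₁ ⊗ₖ Y₂) * mpow (X₁ ⊗ₖ X₂) γ =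
        (mpow X₁ γ * Y₁ * mpow X₁ γ) ⊗ₖ (mpow X₂ γ * Y₂ * mpow X₂ γ) := by
    simp only [mpow_kronecker hX₁ hX₂, mul_kronecker_mul]
  rw [geomMean, mpow_sandwich_kronecker, mpow_kronecker hX₁ hX₂,
    mpow_kronecker (posSemidef_mpow_mul_mul_mpow hY₁ X₁ _)
      (posSemidef_mpow_mul_mul_mpow hY₂ X₂ _),
    ← mul_kronecker_mul, ← mul_kronecker_mul, geomMean, geomMean]
end

section
/- Let A₁, B₁, A₂, B₂ be finite types. Suppose the matrix J₁ on (A₁×B₁)×(A₁×B₁) admits matrices R₁ and S₁ (S₁ indexed by B₁) such that R₁ + J₁^{T_{B₁}}, R₁ − J₁^{T_{B₁}}, I_{A₁} ⊗ S₁ + R₁^{T_{B₁}}, and I_{A₁} ⊗ S₁ − R₁^{T_{B₁}} are all positive semidefinite and tr S₁ ≤ 1; suppose similarly J₂ admits R₂ and S₂ with the analogous conditions and tr S₂ ≤ 1. Let Ĵ denote J₁ ⊗ J₂ reindexed along the canonical bijection (A₁×B₁)×(A₂×B₂) ≃ (A₁×A₂)×(B₁×B₂). Then there exist matrices R (on (A₁×A₂)×(B₁×B₂)-indexed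 square matrices) and S (on B₁×B₂) such that R + Ĵ^{T_{B₁×B₂}}, R − Ĵ^{T_{B₁×B₂}}, I_{A₁×A₂} ⊗ S + R^{T_{B₁×B₂}}, and I_{A₁×A₂} ⊗ S − R^{T_{B₁×B₂}} are all positive semidefinite and tr S ≤ 1; indeed one may take R to be R₁ ⊗ R₂ reindexed the same way and S = S₁ ⊗ S₂. (This says the set 𝒱_β of constant-bounded subchannels is closed under tensor products, the key step in the sub-additivity of the geometric Rényi Upsilon-information.) -/
open Matrix Kronecker ComplexOrder

/-!
The identities `2 (X ⊗ X' ± Y ⊗ Y') = (X + Y) ⊗ (X' ± Y') + (X - Y) ⊗ (X' ∓ Y')` show that the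
two-sided bounds `-X ≤ Y ≤ X` and `-X' ≤ Y' ≤ X'` multiply to `-X ⊗ X' ≤ Y ⊗ Y' ≤ X ⊗ X'`. Partial
transposition and `S ↦ 1 ⊗ S` commute with regrouped tensor products, so all four semidefinite
conditions are instances of this fact. For the trace condition, `-1 ⊗ S ≤ Q ≤ 1 ⊗ S` forces `S` to
be positive semidefinite, so that `tr S₁` lies in `[0, 1]` and can only shrink a positive `tr S₂`.
-/

section Dominates

variable {R 𝕜 m n : Type*} [Ring R] [PartialOrder R] [StarRing R] [RCLike 𝕜]

/-- The two-sided Loewner bound `-X ≤ Y ≤ X`, the form of all semidefinite constraints in `𝒱_β`.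
It is stated as positive semidefiniteness of `X + Y` and `X - Y`. -/
structure Dominates (X Y : Matrix m m R) : Prop where
  posSemidef_add : (X + Y).PosSemidef
  posSemidef_sub : (X - Y).PosSemidef

theorem posSemidef_kronecker {P : Matrix m m 𝕜} {Q : Matrix n n 𝕜}
    (hP : P.PosSemidef) (hQ : Q.PosSemidef) : (P ⊗ₖ Q).PosSemidef :=
  -- `P ⊗ₖ Q` is a Hadamard product of pullbacks, and the Schur product theorem holds for
  -- infinite index types, unlike Mathlib's `Matrix.PosSemidef.kronecker`.
  (hP.submatrix Prod.fst).hadamard (hQ.submatrix Prod.snd)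

theorem posSemidef_of_one_kronecker [DecidableEq m] [Nonempty m] {Q : Matrix n n R}
    (h : ((1 : Matrix m m R) ⊗ₖ Q).PosSemidef) : Q.PosSemidef := by
  obtain ⟨a⟩ := ‹Nonempty m›
  have hblock : ((1 : Matrix m m R) ⊗ₖ Q).submatrix (Prod.mk a) (Prod.mk a) = Q := by
    ext b b'
    simp
  exact hblock ▸ h.submatrix (Prod.mk a)

namespace Dominates

theorem neg {X Y : Matrix m m R} (h : Dominates X Y) : Dominates X (-Y) :=
  ⟨sub_eq_add_neg X Y ▸ h.posSemidef_sub, (sub_neg_eq_add X Y).symm ▸ h.posSemidef_add⟩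

theorem submatrix {X Y : Matrix m m R} (h : Dominates X Y) (e : n → m) :
    Dominates (X.submatrix e e) (Y.submatrix e e) :=
  ⟨h.posSemidef_add.submatrix e, h.posSemidef_sub.submatrix e⟩

variable {X Y : Matrix m m 𝕜} {X' Y' : Matrix n n 𝕜}

theorem posSemidef_left (h : Dominates X Y) : X.PosSemidef := by
  have midpoint : X = (2⁻¹ : 𝕜) • ((X + Y) + (X - Y)) := by module
  rw [midpoint]
  exact (h.posSemidef_add.add h.posSemidef_sub).smul (by positivity)

theorem posSemidef_kronecker_add_kronecker (h : Dominates X Y) (h' : Dominates X' Y') :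
    (X ⊗ₖ X' + Y ⊗ₖ Y').PosSemidef := by
  have polarization : X ⊗ₖ X' + Y ⊗ₖ Y' =
      (2⁻¹ : 𝕜) • ((X + Y) ⊗ₖ (X' + Y') + (X - Y) ⊗ₖ (X' - Y')) := by
    ext
    simp only [Matrix.add_apply, Matrix.sub_apply, Matrix.smul_apply, kroneckerMap_apply,
      smul_eq_mul]
    ring
  rw [polarization]
  have posSemidef_sum := (posSemidef_kronecker h.posSemidef_add h'.posSemidef_add).add
    (posSemidef_kronecker h.posSemidef_sub h'.posSemidef_sub)
  exact posSemidef_sum.smul (by positivity)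

theorem kronecker (h : Dominates X Y) (h' : Dominates X' Y') :
    Dominates (X ⊗ₖ X') (Y ⊗ₖ Y') where
  posSemidef_add := h.posSemidef_kronecker_add_kronecker h'
  posSemidef_sub := by
    have kronecker_neg : Y ⊗ₖ (-Y') = -(Y ⊗ₖ Y') := by
      ext
      simp
    simpa only [kronecker_neg, ← sub_eq_add_neg] using h.posSemidef_kronecker_add_kronecker h'.neg

end Dominates

end Dominates

section RegroupedKronecker

variable {A₁ B₁ A₂ B₂ : Type*}

/-- The tensor product of two bipartite operators, as an operator on the bipartite system
`A₁A₂ : B₁B₂`; for Choi matrices it is the Choi matrix of the tensor product of the maps. -/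
def regroupedKronecker {α : Type*} [Mul α] (M : Matrix (A₁ × B₁) (A₁ × B₁) α)
    (N : Matrix (A₂ × B₂) (A₂ × B₂) α) :
    Matrix ((A₁ × A₂) × (B₁ × B₂)) ((A₁ × A₂) × (B₁ × B₂)) α :=
  reindex (Equiv.prodProdProdComm A₁ B₁ A₂ B₂) (Equiv.prodProdProdComm A₁ B₁ A₂ B₂) (M ⊗ₖ N)

theorem regroupedKronecker_kronecker_kronecker {α : Type*} [CommSemigroup α]
    (P₁ : Matrix A₁ A₁ α) (Q₁ : Matrix B₁ B₁ α) (P₂ : Matrix A₂ A₂ α) (Q₂ : Matrix B₂ B₂ α) :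
    regroupedKronecker (P₁ ⊗ₖ Q₁) (P₂ ⊗ₖ Q₂) = (P₁ ⊗ₖ P₂) ⊗ₖ (Q₁ ⊗ₖ Q₂) := by
  ext
  exact mul_mul_mul_comm _ _ _ _

theorem ptB_regroupedKronecker (M : Matrix (A₁ × B₁) (A₁ × B₁) ℂ)
    (N : Matrix (A₂ × B₂) (A₂ × B₂) ℂ) :
    ptB (regroupedKronecker M N) = regroupedKronecker (ptB M) (ptB N) :=
  rfl

theorem Dominates.regroupedKronecker {𝕜 : Type*} [RCLike 𝕜]
    {X Y : Matrix (A₁ × B₁) (A₁ × B₁) 𝕜} {X' Y' : Matrix (A₂ × B₂) (A₂ × B₂) 𝕜}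
    (h : Dominates X Y) (h' : Dominates X' Y') :
    Dominates (regroupedKronecker X X') (regroupedKronecker Y Y') :=
  (h.kronecker h').submatrix _

end RegroupedKronecker

theorem re_mul_le_one_of_nonneg {z w : ℂ} (hz : 0 ≤ z) (hz_le : z.re ≤ 1) (hw_le : w.re ≤ 1) :
    (z * w).re ≤ 1 := by
  obtain ⟨hz_re, hz_im⟩ := Complex.nonneg_iff.mp hz
  calc (z * w).re = z.re * w.re := by rw [Complex.mul_re, ← hz_im, zero_mul, sub_zero]
    _ ≤ z.re := mul_le_of_le_one_right hz_re hw_le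
    _ ≤ 1 := hz_le

/-- The pair `(R, S)` witnesses that the map with Choi matrix `J` belongs to the set `𝒱_β` of
constant-bounded subchannels: `-R ≤ J^{T_B} ≤ R`, `-1 ⊗ S ≤ R^{T_B} ≤ 1 ⊗ S` and `tr S ≤ 1`. The
trace condition is on the real part because `S` is not assumed Hermitian. -/
structure IsVBetaWitness {A B : Type*} [DecidableEq A] [Fintype B]
    (J R : Matrix (A × B) (A × B) ℂ) (S : Matrix B B ℂ) : Prop where
  dominates_ptB_choi : Dominates R (ptB J)
  one_kronecker_dominates_ptB : Dominates ((1 : Matrix A A ℂ) ⊗ₖ S) (ptB R)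
  trace_re_le_one : S.trace.re ≤ 1

theorem IsVBetaWitness.trace_nonneg {A B : Type*} [DecidableEq A] [Nonempty A] [Fintype B]
    {J R : Matrix (A × B) (A × B) ℂ} {S : Matrix B B ℂ} (h : IsVBetaWitness J R S) :
    0 ≤ S.trace :=
  (posSemidef_of_one_kronecker h.one_kronecker_dominates_ptB.posSemidef_left).trace_nonneg

theorem vbeta_closed_under_tensor_general {A₁ B₁ A₂ B₂ : Type*}
    [DecidableEq A₁] [Nonempty A₁] [Fintype B₁] [DecidableEq A₂] [Fintype B₂]
    {J₁ R₁ : Matrix (A₁ × B₁) (A₁ × B₁) ℂ} {S₁ : Matrix B₁ B₁ ℂ}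
    {J₂ R₂ : Matrix (A₂ × B₂) (A₂ × B₂) ℂ} {S₂ : Matrix B₂ B₂ ℂ}
    (h₁ : IsVBetaWitness J₁ R₁ S₁) (h₂ : IsVBetaWitness J₂ R₂ S₂) :
    IsVBetaWitness (regroupedKronecker J₁ J₂) (regroupedKronecker R₁ R₂) (S₁ ⊗ₖ S₂) where
  dominates_ptB_choi := by
    rw [ptB_regroupedKronecker]
    exact h₁.dominates_ptB_choi.regroupedKronecker h₂.dominates_ptB_choi
  one_kronecker_dominates_ptB := by
    rw [ptB_regroupedKronecker, ← one_kronecker_one, ← regroupedKronecker_kronecker_kronecker]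
    exact h₁.one_kronecker_dominates_ptB.regroupedKronecker h₂.one_kronecker_dominates_ptB
  trace_re_le_one := by
    rw [trace_kronecker]
    exact re_mul_le_one_of_nonneg h₁.trace_nonneg h₁.trace_re_le_one h₂.trace_re_le_one

/-- the set `𝒱_β` of constant-bounded subchannels is closed under tensor
products: the witnesses `R = R₁ ⊗ R₂` (reindexed) and `S = S₁ ⊗ S₂` verify the defining
semidefinite conditions for `Ĵ = J₁ ⊗ J₂` (reindexed). -/
theorem vbeta_closed_under_tensor {A₁ B₁ A₂ B₂ : Type*}
    [Fintype A₁] [DecidableEq A₁] [Fintype B₁] [DecidableEq B₁]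
    [Fintype A₂] [DecidableEq A₂] [Fintype B₂] [DecidableEq B₂]
    [Nonempty A₁] [Nonempty A₂]
    (J₁ R₁ : Matrix (A₁ × B₁) (A₁ × B₁) ℂ) (S₁ : Matrix B₁ B₁ ℂ)
    (h11 : (R₁ + ptB J₁).PosSemidef) (h12 : (R₁ - ptB J₁).PosSemidef)
    (h13 : ((1 : Matrix A₁ A₁ ℂ) ⊗ₖ S₁ + ptB R₁).PosSemidef)
    (h14 : ((1 : Matrix A₁ A₁ ℂ) ⊗ₖ S₁ - ptB R₁).PosSemidef)
    (h15 : S₁.trace.re ≤ 1)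
    (J₂ R₂ : Matrix (A₂ × B₂) (A₂ × B₂) ℂ) (S₂ : Matrix B₂ B₂ ℂ)
    (h21 : (R₂ + ptB J₂).PosSemidef) (h22 : (R₂ - ptB J₂).PosSemidef)
    (h23 : ((1 : Matrix A₂ A₂ ℂ) ⊗ₖ S₂ + ptB R₂).PosSemidef)
    (h24 : ((1 : Matrix A₂ A₂ ℂ) ⊗ₖ S₂ - ptB R₂).PosSemidef)
    (h25 : S₂.trace.re ≤ 1) :
    (Matrix.reindex (Equiv.prodProdProdComm A₁ B₁ A₂ B₂)
        (Equiv.prodProdProdComm A₁ B₁ A₂ B₂) (R₁ ⊗ₖ R₂) +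
      ptB (Matrix.reindex (Equiv.prodProdProdComm A₁ B₁ A₂ B₂)
        (Equiv.prodProdProdComm A₁ B₁ A₂ B₂) (J₁ ⊗ₖ J₂))).PosSemidef ∧
    (Matrix.reindex (Equiv.prodProdProdComm A₁ B₁ A₂ B₂)
        (Equiv.prodProdProdComm A₁ B₁ A₂ B₂) (R₁ ⊗ₖ R₂) -
      ptB (Matrix.reindex (Equiv.prodProdProdComm A₁ B₁ A₂ B₂)
        (Equiv.prodProdProdComm A₁ B₁ A₂ B₂) (J₁ ⊗ₖ J₂))).PosSemidef ∧
    ((1 : Matrix (A₁ × A₂) (A₁ × A₂) ℂ) ⊗ₖ (S₁ ⊗ₖ S₂) +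
      ptB (Matrix.reindex (Equiv.prodProdProdComm A₁ B₁ A₂ B₂)
        (Equiv.prodProdProdComm A₁ B₁ A₂ B₂) (R₁ ⊗ₖ R₂))).PosSemidef ∧
    ((1 : Matrix (A₁ × A₂) (A₁ × A₂) ℂ) ⊗ₖ (S₁ ⊗ₖ S₂) -
      ptB (Matrix.reindex (Equiv.prodProdProdComm A₁ B₁ A₂ B₂)
        (Equiv.prodProdProdComm A₁ B₁ A₂ B₂) (R₁ ⊗ₖ R₂))).PosSemidef ∧
    ((S₁ ⊗ₖ S₂).trace.re ≤ 1) := by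
  obtain ⟨⟨hJ, hJ'⟩, ⟨hR, hR'⟩, hS⟩ := vbeta_closed_under_tensor_general
    ⟨⟨h11, h12⟩, ⟨h13, h14⟩, h15⟩ ⟨⟨h21, h22⟩, ⟨h23, h24⟩, h25⟩
  exact ⟨hJ, hJ', hR, hR', hS⟩
end

section
/- Let A and B be finite types and let J be a positive semidefinite matrix indexed by (A×B)×(A×B). Then inf{ λ_max(tr_B Y) : Y ∈ SEPcone(A:B) and Y − J is positive semidefinite } = inf{ t ∈ ℝ : t > 0 and there exists W ∈ SEPcone(A:B) with I_A − tr_B W positive semidefinite and t·W − J positive semidefinite }. (This is the reformulation showing that the max-relative entropy of entanglement of a channel equals its Sigma-information E_max = E_{max,Σ}, at the level of Choi matrices.) -/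
open Matrix Kronecker ComplexOrder

/-! Rescaling `Y = t • W` turns the constraint `tr_B W ≤ I` into `tr_B Y ≤ t • I`, that is, into
`λ_max(tr_B Y) ≤ t`. Hence the `t > 0` feasible for the second program are exactly those lying above
some value of the first. All values of the first are nonnegative, so the restriction `t > 0` does
not change the infimum. -/

theorem csInf_eq_csInf_setOf_lt_and_exists_le {α : Type*} [ConditionallyCompleteLinearOrder α]
    [DenselyOrdered α] [NoMaxOrder α] {s : Set α} {a : α} (hs : s.Nonempty)
    (ha : a ∈ lowerBounds s) : sInf s = sInf {t | a < t ∧ ∃ x ∈ s, x ≤ t} := by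
  have mem_of_lt : ∀ x ∈ s, ∀ t, x < t → t ∈ {t | a < t ∧ ∃ x ∈ s, x ≤ t} :=
    fun x hx t hxt => ⟨(ha hx).trans_lt hxt, x, hx, hxt.le⟩
  obtain ⟨x, hx⟩ := hs
  obtain ⟨u, hxu⟩ := exists_gt x
  refine (IsGLB.csInf_eq ⟨?_, ?_⟩ ⟨u, mem_of_lt x hx u hxu⟩).symm
  · rintro t ⟨-, y, hy, hyt⟩
    exact (csInf_le ⟨a, ha⟩ hy).trans hyt
  · intro b hb
    exact le_csInf ⟨x, hx⟩ fun y hy =>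
      le_of_forall_gt_imp_ge_of_dense fun t hyt => hb (mem_of_lt y hy t hyt)

theorem posSemidef_smul_one_sub_iff_eigenvalues_le {𝕜 n : Type*} [RCLike 𝕜] [Fintype n]
    [DecidableEq n] {M : Matrix n n 𝕜} (hM : M.IsHermitian) {t : ℝ} :
    (t • (1 : Matrix n n 𝕜) - M).PosSemidef ↔ ∀ i, hM.eigenvalues i ≤ t := by
  open scoped MatrixOrder in
  rw [← Matrix.le_iff, ← Algebra.algebraMap_eq_smul_one,
    le_algebraMap_iff_spectrum_le (R := ℝ) (a := M) hM,
    hM.spectrum_real_eq_range_eigenvalues, Set.forall_mem_range]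

section LamMax

variable {n : Type*} [Fintype n] [DecidableEq n] {M : Matrix n n ℂ} {t : ℝ}

theorem lamMax_nonneg (hM : M.PosSemidef) : 0 ≤ lamMax M := by
  rw [lamMax, dif_pos hM.isHermitian]
  exact Real.iSup_nonneg hM.eigenvalues_nonneg

theorem lamMax_le_iff (hM : M.IsHermitian) (ht : 0 ≤ t) :
    lamMax M ≤ t ↔ (t • (1 : Matrix n n ℂ) - M).PosSemidef := by
  rw [lamMax, dif_pos hM, posSemidef_smul_one_sub_iff_eigenvalues_le hM]
  exact ⟨fun h i => (le_ciSup (Set.finite_range _).bddAbove i).trans h,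
    fun h => Real.iSup_le h ht⟩

theorem lamMax_smul_le_iff (hM : M.IsHermitian) (ht : 0 < t) :
    lamMax (t • M) ≤ t ↔ ((1 : Matrix n n ℂ) - M).PosSemidef := by
  rw [lamMax_le_iff (hM.smul (.all t)) ht.le, ← smul_sub]
  refine ⟨fun h => ?_, fun h => h.smul ht.le⟩
  simpa only [inv_smul_smul₀ ht.ne'] using h.smul (inv_nonneg.2 ht.le)

end LamMax

section PartialTrace

variable {A B : Type*} [Fintype B]

theorem ptrB_smul {R : Type*} [DistribSMul R ℂ] (c : R) (M : Matrix (A × B) (A × B) ℂ) :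
    ptrB (c • M) = c • ptrB M := by
  ext a a'
  exact Finset.smul_sum.symm

theorem ptrB_eq_sum_submatrix (M : Matrix (A × B) (A × B) ℂ) :
    ptrB M = ∑ b, M.submatrix (·, b) (·, b) := by
  ext a a'
  simp [ptrB, Matrix.sum_apply]

theorem posSemidef_ptrB {M : Matrix (A × B) (A × B) ℂ} (hM : M.PosSemidef) :
    (ptrB M).PosSemidef := by
  rw [ptrB_eq_sum_submatrix]
  exact Matrix.posSemidef_sum _ fun b _ => hM.submatrix (·, b)

end PartialTrace

namespace SEPcone

variable {A B : Type*} [Fintype A] [Fintype B]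

theorem posSemidef {Y : Matrix (A × B) (A × B) ℂ} (hY : Y ∈ SEPcone A B) : Y.PosSemidef := by
  obtain ⟨k, P, Q, hP, hQ, rfl⟩ := hY
  exact Matrix.posSemidef_sum _ fun i _ => (hP i).kronecker (hQ i)

theorem smul_mem {c : ℝ} (hc : 0 ≤ c) {Y : Matrix (A × B) (A × B) ℂ} (hY : Y ∈ SEPcone A B) :
    c • Y ∈ SEPcone A B := by
  obtain ⟨k, P, Q, hP, hQ, rfl⟩ := hY
  refine ⟨k, fun i => c • P i, Q, fun i => (hP i).smul hc, hQ, ?_⟩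
  simp only [Finset.smul_sum, Matrix.smul_kronecker]

theorem one_mem [DecidableEq A] [DecidableEq B] :
    (1 : Matrix (A × B) (A × B) ℂ) ∈ SEPcone A B :=
  ⟨1, fun _ => 1, fun _ => 1, fun _ => .one, fun _ => .one, by simp⟩

theorem exists_mem_posSemidef_sub {J : Matrix (A × B) (A × B) ℂ} (hJ : J.IsHermitian) :
    ∃ Y ∈ SEPcone A B, (Y - J).PosSemidef := by
  classical
  have hc : 0 ≤ max (lamMax J) 0 := le_max_right _ _
  exact ⟨max (lamMax J) 0 • 1, smul_mem hc one_mem, (lamMax_le_iff hJ hc).1 (le_max_left _ _)⟩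

end SEPcone

section ConeProgram

variable {A B : Type*} [Fintype A] [DecidableEq A] [Fintype B] {C : Set (Matrix (A × B) (A × B) ℂ)}

theorem exists_lamMax_ptrB_le_iff (hC_smul : ∀ ⦃c : ℝ⦄, 0 < c → ∀ ⦃Y⦄, Y ∈ C → c • Y ∈ C)
    (hC_herm : ∀ Y ∈ C, (ptrB Y).IsHermitian) (J : Matrix (A × B) (A × B) ℂ) {t : ℝ} (ht : 0 < t) :
    (∃ Y ∈ C, (Y - J).PosSemidef ∧ lamMax (ptrB Y) ≤ t) ↔
      ∃ W ∈ C, ((1 : Matrix A A ℂ) - ptrB W).PosSemidef ∧ (t • W - J).PosSemidef := by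
  have rescale : ∀ W ∈ C, lamMax (ptrB (t • W)) ≤ t ↔ ((1 : Matrix A A ℂ) - ptrB W).PosSemidef := by
    intro W hW
    rw [ptrB_smul, lamMax_smul_le_iff (hC_herm W hW) ht]
  constructor
  · rintro ⟨Y, hY, hYJ, hYt⟩
    obtain ⟨W, hW, rfl⟩ : ∃ W ∈ C, t • W = Y :=
      ⟨t⁻¹ • Y, hC_smul (inv_pos.2 ht) hY, smul_inv_smul₀ ht.ne' Y⟩
    exact ⟨W, hW, (rescale W hW).1 hYt, hYJ⟩
  · rintro ⟨W, hW, hW1, hWJ⟩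
    exact ⟨t • W, hC_smul ht hW, hWJ, (rescale W hW).2 hW1⟩

theorem emax_eq_sigma_general (hC_smul : ∀ ⦃c : ℝ⦄, 0 < c → ∀ ⦃Y⦄, Y ∈ C → c • Y ∈ C)
    (hC_psd : ∀ Y ∈ C, (ptrB Y).PosSemidef) {J : Matrix (A × B) (A × B) ℂ}
    (hJ : ∃ Y ∈ C, (Y - J).PosSemidef) :
    sInf {x : ℝ | ∃ Y ∈ C, (Y - J).PosSemidef ∧ x = lamMax (ptrB Y)} =
      sInf {t : ℝ | 0 < t ∧ ∃ W ∈ C,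
        ((1 : Matrix A A ℂ) - ptrB W).PosSemidef ∧ (t • W - J).PosSemidef} := by
  set values := {x : ℝ | ∃ Y ∈ C, (Y - J).PosSemidef ∧ x = lamMax (ptrB Y)}
  have values_nonempty : values.Nonempty :=
    let ⟨Y, hY, hYJ⟩ := hJ
    ⟨_, Y, hY, hYJ, rfl⟩
  have zero_mem_lowerBounds : 0 ∈ lowerBounds values := by
    rintro _ ⟨Y, hY, -, rfl⟩
    exact lamMax_nonneg (hC_psd Y hY)
  have exists_value_le_iff (t : ℝ) :
      (∃ x ∈ values, x ≤ t) ↔ ∃ Y ∈ C, (Y - J).PosSemidef ∧ lamMax (ptrB Y) ≤ t :=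
    ⟨fun ⟨_, ⟨Y, hY, hYJ, hx⟩, hxt⟩ => ⟨Y, hY, hYJ, hx ▸ hxt⟩,
      fun ⟨Y, hY, hYJ, hYt⟩ => ⟨_, ⟨Y, hY, hYJ, rfl⟩, hYt⟩⟩
  rw [csInf_eq_csInf_setOf_lt_and_exists_le values_nonempty zero_mem_lowerBounds]
  congr 1
  ext t
  exact and_congr_right fun ht => (exists_value_le_iff t).trans
    (exists_lamMax_ptrB_le_iff hC_smul (fun Y hY => (hC_psd Y hY).isHermitian) J ht)

end ConeProgram

/-- the SDP reformulation showing `E_max = E_{max,Σ}` at the level of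
Choi matrices. -/
theorem emax_eq_sigma {A B : Type*} [Fintype A] [DecidableEq A] [Fintype B]
    (J : Matrix (A × B) (A × B) ℂ) (hJ : J.PosSemidef) :
    sInf {x : ℝ | ∃ Y ∈ SEPcone A B, (Y - J).PosSemidef ∧ x = lamMax (ptrB Y)} =
      sInf {t : ℝ | 0 < t ∧ ∃ W ∈ SEPcone A B,
        ((1 : Matrix A A ℂ) - ptrB W).PosSemidef ∧ (t • W - J).PosSemidef} :=
  emax_eq_sigma_general (fun _ hc _ => SEPcone.smul_mem hc.le)
    (fun _ hY => posSemidef_ptrB (SEPcone.posSemidef hY))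
    (SEPcone.exists_mem_posSemidef_sub hJ.isHermitian)
end
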